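/- Let α < 0 and r > 0. For every τ ∈ V_{α,r} with τ(0) = τ'(0) = 0, with associated extension F of its Laplace transform, and every ε > 0, there exist a Schwartz function ψ on ℝ supported in [0,∞), numbers α' < α and r' > r, and an analytic extension G of L{ψ;·} to an open neighborhood of R̄_{α',r'}, such that sup_{x≥0}|τ'(x) − ψ'(x)| + sup_{s∈R̄_{α,r}} |F(s) − G(s)| < ε. That is, Y is dense in V⁰_{α,r}. -/

import Mathlib

open Filter Set MeasureTheory

/-- The Laplace transform `L{f;s} = ∫_0^∞ f(x) e^{-sx} dx`. -/
noncomputable def Laplace (f : ℝ → ℂ) (s : ℂ) : ℂ :=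
  ∫ x in Set.Ioi (0 : ℝ), f x * Complex.exp (-(s * (x : ℂ)))

/-- The closed rectangle `R̄_{α,r} = {s : α ≤ Re s ≤ 1, |Im s| ≤ r}`. -/
def Rbar (α r : ℝ) : Set ℂ := {s : ℂ | α ≤ s.re ∧ s.re ≤ 1 ∧ |s.im| ≤ r}

/-- The open rectangle `R_{α,r} = {s : α < Re s < 1, |Im s| < r}`. -/
def Ropen (α r : ℝ) : Set ℂ := {s : ℂ | α < s.re ∧ s.re < 1 ∧ |s.im| < r}

open scoped ContDiff in
/-- A smooth mollifier supported in `[0, δ]`. -/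
structure Moll (δ : ℝ) (φ : ℝ → ℂ) : Prop where
  smooth : ContDiff ℝ ∞ φ
  cpt : HasCompactSupport φ
  supp : Function.support φ ⊆ Set.Icc 0 δ

lemma Moll.deriv {δ : ℝ} {φ : ℝ → ℂ} (h : Moll δ φ) : Moll δ (deriv φ) where
  smooth := by
    have := h.smooth
    exact (contDiff_infty_iff_deriv.1 this).2
  cpt := h.cpt.deriv
  supp := (support_deriv_subset).trans (closure_minimal h.supp isClosed_Icc)

lemma Moll.continuous {δ : ℝ} {φ : ℝ → ℂ} (h : Moll δ φ) : Continuous φ := h.smooth.continuous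

lemma Moll.integrable_mul {δ : ℝ} {φ g : ℝ → ℂ} (h : Moll δ φ) (hg : Continuous g) :
    Integrable (fun t => φ t * g t) :=
  (h.continuous.mul hg).integrable_of_hasCompactSupport h.cpt.mul_right

lemma exists_moll (δ : ℝ) (hδ : 0 < δ) : ∃ φ : ℝ → ℂ, Moll δ φ ∧ ∫ t, φ t = 1 ∧ ∫ t, ‖φ t‖ = 1 := by
  let b : ContDiffBump (δ / 2 : ℝ) := ⟨δ / 4, δ / 2, by linarith, by linarith⟩
  refine ⟨fun t => ((b.normed volume t : ℝ) : ℂ), ⟨?_, ?_, ?_⟩, ?_, ?_⟩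
  · exact Complex.ofRealCLM.contDiff.comp b.contDiff_normed
  · exact b.hasCompactSupport_normed.comp_left (g := fun x : ℝ => (x : ℂ)) (by simp)
  · intro t ht
    have : t ∈ Function.support (b.normed volume) := by
      intro h0; apply ht; simp [h0]
    rw [b.support_normed_eq, Metric.mem_ball, Real.dist_eq, abs_lt] at this
    change -(δ/2) < _ ∧ _ < δ/2 at this
    constructor <;> linarith [this.1, this.2]
  · rw [integral_complex_ofReal, b.integral_normed]; simp
  · rw [← b.integral_normed (μ := volume)]
    congr 1; ext t
    simp [abs_of_nonneg (b.nonneg_normed t)]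

lemma moll_avg {δ : ℝ} {φ : ℝ → ℂ} (h : Moll δ φ) (h1 : ∫ t, φ t = 1) (h2 : ∫ t, ‖φ t‖ = 1)
    (g : ℝ → ℂ) (hg : Continuous g) (c : ℂ) (ε : ℝ) (hb : ∀ t ∈ Set.Icc 0 δ, ‖c - g t‖ ≤ ε) :
    ‖c - ∫ t, φ t * g t‖ ≤ ε := by
  have e : c - ∫ t, φ t * g t = ∫ t, φ t * (c - g t) := by
    simp_rw [mul_sub]
    rw [integral_sub (h.integrable_mul continuous_const) (h.integrable_mul hg),
      integral_mul_const, h1, one_mul]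
  rw [e]
  calc _ ≤ ∫ t, ‖φ t‖ * ε := by
        apply norm_integral_le_of_norm_le
        · exact ((h.continuous.norm.integrable_of_hasCompactSupport h.cpt.norm)).mul_const _
        · refine Eventually.of_forall fun t => ?_
          rw [norm_mul]
          by_cases ht : φ t = 0
          · simp [ht]
          · exact mul_le_mul_of_nonneg_left (hb t (h.supp ht)) (norm_nonneg _)
    _ = ε := by rw [integral_mul_const, h2, one_mul]

/-- The convolution of a mollifier with `σ`. -/
noncomputable def mconv (φ σ : ℝ → ℂ) : ℝ → ℂ :=
  convolution φ σ (ContinuousLinearMap.mul ℝ ℂ) volume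

lemma mconv_apply (φ σ : ℝ → ℂ) (x : ℝ) : mconv φ σ x = ∫ t, φ t * σ (x - t) := rfl

lemma mconv_decay {σ : ℝ → ℂ} {C c : ℝ} (hσc : Continuous σ) (hσ0 : ∀ y ≤ 0, σ y = 0)
    (hσ : ∀ y, ‖σ y‖ ≤ C * Real.exp (-(c * y))) {δ : ℝ} (n : ℕ) :
    ∀ φ : ℝ → ℂ, Moll δ φ → ∃ K : ℝ, 0 ≤ K ∧ ∀ x, ‖iteratedDeriv n (mconv φ σ) x‖ ≤ K * Real.exp (-(c * x))
      ∧ (x ≤ 0 → iteratedDeriv n (mconv φ σ) x = 0) := by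
  induction n with
  | zero =>
    intro φ h
    simp only [iteratedDeriv_zero]
    have hC : 0 ≤ C := by
      have := (norm_nonneg _).trans (hσ 0)
      simpa using this
    refine ⟨C * ∫ t, ‖φ t‖ * Real.exp (c * t), ?_, fun x => ⟨?_, ?_⟩⟩
    · exact mul_nonneg hC (integral_nonneg fun t => by positivity)
    · rw [mconv_apply]
      calc _ ≤ ∫ t, C * Real.exp (-(c * x)) * (‖φ t‖ * Real.exp (c * t)) := by
            apply norm_integral_le_of_norm_le
            · apply Integrable.const_mul
              apply Continuous.integrable_of_hasCompactSupport
              · exact h.continuous.norm.mul (by fun_prop)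
              · exact h.cpt.norm.mul_right
            · refine Eventually.of_forall fun t => ?_
              rw [norm_mul]
              calc _ ≤ ‖φ t‖ * (C * Real.exp (-(c * (x - t)))) := by gcongr; exact hσ _
                _ = _ := by
                  rw [show -(c * (x - t)) = -(c*x) + c * t by ring, Real.exp_add]; ring
        _ = _ := by rw [integral_const_mul]; ring
    · intro hx
      rw [mconv_apply]
      apply integral_eq_zero_of_ae
      refine Eventually.of_forall fun t => ?_
      by_cases ht : φ t = 0
      · simp [ht]
      · have := (h.supp ht).1
        simp [hσ0 (x - t) (by linarith)]
  | succ n ih =>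
    intro φ h
    rw [iteratedDeriv_succ']
    have : deriv (mconv φ σ) = mconv (deriv φ) σ := by
      ext x
      exact (h.cpt.hasDerivAt_convolution_left (ContinuousLinearMap.mul ℝ ℂ) (h.smooth.of_le (by exact_mod_cast le_top))
        hσc.locallyIntegrable x).deriv
    rw [this]
    exact ih _ h.deriv

lemma exists_schwartz {σ : ℝ → ℂ} {C c : ℝ} (hc : 0 < c) (hσc : Continuous σ) (hσ0 : ∀ y ≤ 0, σ y = 0)
    (hσ : ∀ y, ‖σ y‖ ≤ C * Real.exp (-(c * y))) {δ : ℝ} {φ : ℝ → ℂ} (h : Moll δ φ) :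
    ∃ ψ : SchwartzMap ℝ ℂ, (ψ : ℝ → ℂ) = mconv φ σ := by
  refine ⟨⟨mconv φ σ, ?_, ?_⟩, rfl⟩
  · exact h.cpt.contDiff_convolution_left (n := ⊤) (ContinuousLinearMap.mul ℝ ℂ) h.smooth hσc.locallyIntegrable
  · intro k n
    obtain ⟨K, hK, hb⟩ := mconv_decay hσc hσ0 hσ n φ h
    refine ⟨K * (k.factorial / c ^ k), fun x => ?_⟩
    rw [norm_iteratedFDeriv_eq_norm_iteratedDeriv]
    rcases le_total x 0 with hx | hx
    · rw [(hb x).2 hx]; simp; positivity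
    · have h1 := Real.pow_div_factorial_le_exp (c * x) (by positivity) k
      rw [div_le_iff₀ (by positivity), mul_pow] at h1
      rw [Real.norm_of_nonneg hx]
      calc _ ≤ x ^ k * (K * Real.exp (-(c * x))) := by gcongr; exact (hb x).1
        _ = K * ((c ^ k * x ^ k) * Real.exp (-(c*x)) / c ^ k) := by field_simp
        _ ≤ K * ((Real.exp (c * x) * k.factorial) * Real.exp (-(c*x)) / c ^ k) := by gcongr
        _ = _ := by rw [Real.exp_neg]; field_simp

lemma mconv_deriv {σ σ' : ℝ → ℂ} (hσ : ∀ x, HasDerivAt σ (σ' x) x) (hσ' : Continuous σ')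
    {δ : ℝ} {φ : ℝ → ℂ} (h : Moll δ φ) {K : ℝ} (hK : ∀ x, ‖σ' x‖ ≤ K) (x : ℝ) :
    HasDerivAt (mconv φ σ) (∫ t, φ t * σ' (x - t)) x := by
  have hσc : Continuous σ := continuous_iff_continuousAt.2 fun x => (hσ x).continuousAt
  refine (hasDerivAt_integral_of_dominated_loc_of_deriv_le (μ := volume)
    (F := fun x t => φ t * σ (x - t)) (F' := fun x t => φ t * σ' (x - t)) (s := univ)
    (bound := fun t => ‖φ t‖ * K) univ_mem ?_ ?_ ?_ ?_ ?_ ?_).2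
  · exact Eventually.of_forall fun y => (h.integrable_mul (by fun_prop)).aestronglyMeasurable
  · exact h.integrable_mul (by fun_prop)
  · exact (h.integrable_mul (by fun_prop)).aestronglyMeasurable
  · refine Eventually.of_forall fun t y _ => ?_
    rw [norm_mul]; gcongr; exact hK _
  · exact ((h.continuous.norm.integrable_of_hasCompactSupport h.cpt.norm)).mul_const _
  · refine Eventually.of_forall fun t y _ => ?_
    exact ((hσ (y - t)).comp_sub_const y t).const_mul _

/-- Laplace transform of the mollifier. -/
noncomputable def MLap (φ : ℝ → ℂ) (s : ℂ) : ℂ := ∫ t, φ t * Complex.exp (-(s * (t : ℂ)))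

lemma MLap_differentiable {δ : ℝ} {φ : ℝ → ℂ} (h : Moll δ φ) : Differentiable ℂ (MLap φ) := by
  intro s
  refine (hasDerivAt_integral_of_dominated_loc_of_deriv_le (μ := volume)
    (F := fun s t => φ t * Complex.exp (-(s * (t : ℂ))))
    (F' := fun s t => φ t * (Complex.exp (-(s * (t : ℂ))) * (-(t:ℂ)))) (s := Metric.ball s 1)
    (bound := fun t => ‖φ t * ((Real.exp ((‖s‖ + 1) * |t|) * |t| : ℝ) : ℂ)‖) (Metric.ball_mem_nhds s one_pos)
    ?_ ?_ ?_ ?_ ?_ ?_).2.differentiableAt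
  · exact Eventually.of_forall fun y => (h.integrable_mul (by fun_prop)).aestronglyMeasurable
  · exact h.integrable_mul (by fun_prop)
  · exact (h.integrable_mul (by fun_prop)).aestronglyMeasurable
  · refine Eventually.of_forall fun t y hy => ?_
    rw [norm_mul (φ t), norm_mul (φ t)]
    gcongr
    rw [Complex.norm_real, Real.norm_of_nonneg (by positivity : (0:ℝ) ≤ Real.exp ((‖s‖ + 1) * |t|) * |t|),
      norm_mul, Complex.norm_exp, norm_neg, Complex.norm_real, Real.norm_eq_abs]
    gcongr
    calc _ ≤ ‖-(y * (t:ℂ))‖ := Complex.re_le_norm _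
      _ = ‖y‖ * |t| := by simp
      _ ≤ _ := by
        gcongr
        rw [Metric.mem_ball, dist_eq_norm] at hy
        have := norm_le_norm_add_norm_sub' y s
        linarith
  · exact (h.integrable_mul (by fun_prop)).norm
  · refine Eventually.of_forall fun t y _ => ?_
    have h1 : HasDerivAt (fun y : ℂ => -(y * (t:ℂ))) (-(t:ℂ)) y := by
      simpa using ((hasDerivAt_id y).mul_const (t:ℂ)).fun_neg
    exact h1.cexp.const_mul _

lemma laplace_mconv {σ : ℝ → ℂ} {C c : ℝ} (hc : 0 < c) (hσc : Continuous σ) (hσ0 : ∀ y ≤ 0, σ y = 0)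
    (hσ : ∀ y, ‖σ y‖ ≤ C * Real.exp (-(c * y))) {δ : ℝ} {φ : ℝ → ℂ} (h : Moll δ φ) (s : ℂ) (hs : 0 < s.re) :
    Laplace (mconv φ σ) s = MLap φ s * Laplace σ s := by
  have key : ∀ f : ℝ → ℂ, (∀ y ≤ 0, f y = 0) → Laplace f s = ∫ x, f x * Complex.exp (-(s * (x:ℂ))) := by
    intro f hf
    apply setIntegral_eq_integral_of_forall_compl_eq_zero
    intro x hx
    rw [hf x (not_lt.1 hx), zero_mul]
  have hint : Integrable (fun x => σ x * Complex.exp (-(s * (x:ℂ)))) := by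
    rw [← integrableOn_univ]
    rw [show (univ : Set ℝ) = Iic 0 ∪ Ioi 0 by simp]
    refine IntegrableOn.union ?_ ?_
    · refine (integrableOn_zero).congr_fun (fun x hx => ?_) measurableSet_Iic
      simp [hσ0 x hx]
    · refine Integrable.mono' ((integrableOn_exp_mul_Ioi (a := -c) (by linarith) 0).const_mul C) ?_ ?_
      · exact Continuous.aestronglyMeasurable (by fun_prop)
      · refine (ae_restrict_mem measurableSet_Ioi).mono fun x hx => ?_
        rw [norm_mul, Complex.norm_exp]
        have : Real.exp (-(s * (x:ℂ))).re ≤ 1 := by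
          rw [Real.exp_le_one_iff]; simp
          exact (mul_pos hs hx).le
        calc _ ≤ ‖σ x‖ * 1 := by gcongr
          _ ≤ _ := by rw [mul_one, neg_mul]; exact hσ x
  have h0 : ∀ y ≤ 0, mconv φ σ y = 0 := by
    obtain ⟨K, hK, hb⟩ := mconv_decay hσc hσ0 hσ 0 φ h
    intro y hy
    simpa using (hb y).2 hy
  rw [key _ h0, key _ hσ0]
  have := integral_convolution (μ := volume) (ν := volume) (ContinuousLinearMap.mul ℝ ℂ)
    (h.integrable_mul (g := fun t => Complex.exp (-(s * (t:ℂ)))) (by fun_prop)) hint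
  simp only [ContinuousLinearMap.mul_apply'] at this
  rw [MLap, ← this]
  congr 1; ext x
  rw [mconv_apply, convolution_def, ← integral_mul_const]
  congr 1; ext t
  simp only [ContinuousLinearMap.mul_apply']
  rw [mul_mul_mul_comm, ← Complex.exp_add]
  congr 2
  push_cast; ring

lemma ev_small (a d : ℝ) (hd : 0 < d) : ∀ᶠ η in nhdsWithin (0:ℝ) (Ioi 0), η * a < d := by
  have : Tendsto (fun η : ℝ => η * a) (nhdsWithin 0 (Ioi 0)) (nhds 0) := by
    have h : Continuous (fun η : ℝ => η * a) := by fun_prop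
    simpa using (h.tendsto 0).mono_left nhdsWithin_le_nhds
  exact this.eventually (gt_mem_nhds hd)

/-- Data of a `C¹` function on the line vanishing on the left. -/
structure Dat (T T' : ℝ → ℂ) : Prop where
  der : ∀ x, HasDerivAt T (T' x) x
  cont : Continuous T'
  T0 : ∀ y ≤ 0, T y = 0
  T'0 : ∀ y ≤ 0, T' y = 0
  lim : Tendsto T' atTop (nhds 0)

lemma Dat.tail {T T' : ℝ → ℂ} (h : Dat T T') (δ : ℝ) (hδ : 0 < δ) :
    ∃ X : ℝ, 0 ≤ X ∧ ∀ x, X ≤ x → ‖T' x‖ ≤ δ := by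
  have h1 := (Metric.tendsto_nhds.1 h.lim δ hδ)
  obtain ⟨X, hX⟩ := eventually_atTop.1 h1
  refine ⟨max X 0, le_max_right _ _, fun x hx => ?_⟩
  have := hX x ((le_max_left _ _).trans hx)
  rw [dist_zero_right] at this
  exact this.le

lemma Dat.bdd {T T' : ℝ → ℂ} (h : Dat T T') : ∃ B : ℝ, 0 ≤ B ∧ ∀ x, ‖T' x‖ ≤ B := by
  obtain ⟨X, hX0, hX⟩ := h.tail 1 one_pos
  obtain ⟨B, hB⟩ := (isCompact_Icc (a := (0:ℝ)) (b := X)).exists_bound_of_continuousOn h.cont.continuousOn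
  refine ⟨max B 1, le_max_of_le_right zero_le_one, fun x => ?_⟩
  rcases le_total x 0 with hx | hx
  · rw [h.T'0 x hx, norm_zero]; exact le_max_of_le_right zero_le_one
  rcases le_total x X with hx' | hx'
  · exact le_max_of_le_left (hB x ⟨hx, hx'⟩)
  · exact le_max_of_le_right (hX x hx')

lemma Dat.unif {T T' : ℝ → ℂ} (h : Dat T T') : UniformContinuous T' := by
  apply h.cont.uniformContinuous_of_tendsto_cocompact (x := 0)
  rw [cocompact_eq_atBot_atTop, tendsto_sup]
  refine ⟨?_, h.lim⟩
  refine tendsto_const_nhds.congr' ?_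
  filter_upwards [eventually_le_atBot 0] with x hx
  exact (h.T'0 x hx).symm

lemma Dat.growthB {T T' : ℝ → ℂ} (h : Dat T T') {B : ℝ} (hB : ∀ x, ‖T' x‖ ≤ B) (y : ℝ) (hy : 0 ≤ y) :
    ‖T y‖ ≤ B * y := by
  have := (convex_univ (𝕜 := ℝ)).norm_image_sub_le_of_norm_hasDerivWithin_le (f := T) (f' := T') (C := B)
    (fun x _ => (h.der x).hasDerivWithinAt) (fun x _ => hB x) (mem_univ 0) (mem_univ y)
  rw [h.T0 0 le_rfl, sub_zero, sub_zero, Real.norm_of_nonneg hy] at this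
  exact this

lemma Dat.growth {T T' : ℝ → ℂ} (h : Dat T T') (δ : ℝ) (hδ : 0 < δ) :
    ∃ C : ℝ, 0 ≤ C ∧ ∀ y, 0 ≤ y → ‖T y‖ ≤ δ * y + C := by
  obtain ⟨X, hX0, hX⟩ := h.tail δ hδ
  obtain ⟨B, hB0, hB⟩ := h.bdd
  refine ⟨B * X, by positivity, fun y hy => ?_⟩
  rcases le_total y X with hx' | hx'
  · have := h.growthB hB y hy
    nlinarith [mul_le_mul_of_nonneg_left hx' hB0, mul_nonneg hδ.le hy]
  · have := (convex_Ici (𝕜 := ℝ) X).norm_image_sub_le_of_norm_hasDerivWithin_le (f := T) (f' := T') (C := δ)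
      (fun x _ => (h.der x).hasDerivWithinAt) (fun x hx => hX x hx) self_mem_Ici (mem_Ici.2 hx')
    rw [Real.norm_of_nonneg (by linarith)] at this
    have h2 := h.growthB hB X hX0
    have h3 := norm_le_norm_add_norm_sub' (T y) (T X)
    nlinarith [mul_nonneg hδ.le hX0]

/-- The dilated and damped function. -/
noncomputable def sg (T : ℝ → ℂ) (η : ℝ) (x : ℝ) : ℂ := T ((1 + 2 * η) * x) * ((Real.exp (-(η * x)) : ℝ) : ℂ)

/-- The derivative of `sg`. -/
noncomputable def sg' (T T' : ℝ → ℂ) (η : ℝ) (x : ℝ) : ℂ :=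
  (((1 + 2 * η : ℝ) : ℂ) * T' ((1 + 2 * η) * x) - (η : ℂ) * T ((1 + 2 * η) * x)) * ((Real.exp (-(η * x)) : ℝ) : ℂ)

lemma Dat.sg_der {T T' : ℝ → ℂ} (h : Dat T T') (η x : ℝ) : HasDerivAt (sg T η) (sg' T T' η x) x := by
  have h1 : HasDerivAt (fun x : ℝ => (1 + 2 * η) * x) (1 + 2 * η) x := by
    simpa using (hasDerivAt_id x).const_mul (1 + 2 * η)
  have h2 := (h.der ((1 + 2 * η) * x)).scomp x h1
  have h3 : HasDerivAt (fun x : ℝ => Real.exp (-(η * x))) (Real.exp (-(η * x)) * (-η)) x := by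
    have : HasDerivAt (fun x : ℝ => -(η * x)) (-η) x := by
      simpa using ((hasDerivAt_id x).const_mul η).fun_neg
    exact this.exp
  have h4 := h2.mul h3.ofReal_comp
  refine (h4.congr_deriv ?_)
  simp only [sg', Function.comp_apply, Complex.real_smul]
  push_cast
  ring

lemma Dat.contT {T T' : ℝ → ℂ} (h : Dat T T') : Continuous T :=
  continuous_iff_continuousAt.2 fun x => (h.der x).continuousAt

lemma Dat.sg'_cont {T T' : ℝ → ℂ} (h : Dat T T') (η : ℝ) : Continuous (sg' T T' η) := by
  have := h.contT
  have := h.cont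
  unfold sg'
  fun_prop

lemma Dat.sg_cont {T T' : ℝ → ℂ} (h : Dat T T') (η : ℝ) : Continuous (sg T η) := by
  have := h.contT
  unfold sg
  fun_prop

lemma Dat.sg_zero {T T' : ℝ → ℂ} (h : Dat T T') {η : ℝ} (hη : 0 < η) (y : ℝ) (hy : y ≤ 0) : sg T η y = 0 := by
  rw [sg, h.T0 _ (mul_nonpos_of_nonneg_of_nonpos (by linarith) hy), zero_mul]

lemma Dat.sg_decay {T T' : ℝ → ℂ} (h : Dat T T') {η : ℝ} (hη : 0 < η) :
    ∃ C : ℝ, ∀ y, ‖sg T η y‖ ≤ C * Real.exp (-(η / 2 * y)) := by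
  obtain ⟨B, hB0, hB⟩ := h.bdd
  refine ⟨B * (1 + 2 * η) * (2 / η), fun y => ?_⟩
  rcases le_total y 0 with hy | hy
  · rw [h.sg_zero hη y hy, norm_zero]; positivity
  · rw [sg, norm_mul, Complex.norm_real, Real.norm_of_nonneg (Real.exp_pos _).le]
    have h1 := h.growthB hB ((1 + 2 * η) * y) (by positivity)
    have h2 := Real.add_one_le_exp (η / 2 * y)
    calc _ ≤ (B * ((1 + 2 * η) * y)) * Real.exp (-(η * y)) := by gcongr
      _ = B * (1 + 2 * η) * (2 / η) * ((η / 2 * y) * Real.exp (-(η * y))) := by field_simp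
      _ ≤ B * (1 + 2 * η) * (2 / η) * (Real.exp (η / 2 * y) * Real.exp (-(η * y))) := by
        gcongr; linarith
      _ = _ := by rw [← Real.exp_add]; congr 2; ring

lemma Dat.approx {T T' : ℝ → ℂ} (h : Dat T T') (ε : ℝ) (hε : 0 < ε) :
    ∀ᶠ η in nhdsWithin (0:ℝ) (Ioi 0), ∀ x, ‖T' x - sg' T T' η x‖ ≤ ε := by
  set δ := ε / 12 with hδd
  have hδ : 0 < δ := by positivity
  obtain ⟨X, hX0, hX⟩ := h.tail δ hδ
  obtain ⟨B, hB0, hB⟩ := h.bdd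
  obtain ⟨C, hC0, hC⟩ := h.growth δ hδ
  obtain ⟨d, hd, hu⟩ := Metric.uniformContinuous_iff.1 h.unif δ hδ
  filter_upwards [self_mem_nhdsWithin, ev_small 1 1 one_pos, ev_small (2 * X) d hd,
    ev_small (B * (X + 2)) δ hδ, ev_small C δ hδ] with η hη0 hη1 hηX hηB hηC x
  have hη0 : 0 < η := hη0
  rcases le_total x 0 with hx | hx
  · have : (1 + 2 * η) * x ≤ 0 := mul_nonpos_of_nonneg_of_nonpos (by linarith) hx
    rw [sg', h.T'0 x hx, h.T'0 _ this, h.T0 _ this]; simp [hε.le]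
  set E := Real.exp (-(η * x)) with hE
  have hE0 : 0 < E := Real.exp_pos _
  have hE1 : E ≤ 1 := by rw [hE, Real.exp_le_one_iff]; nlinarith
  have hE2 : 1 - E ≤ η * x := by have := Real.add_one_le_exp (-(η * x)); linarith
  have hE3 : η * x * E ≤ 1 := by
    have h1 := Real.add_one_le_exp (η * x)
    have h2 : Real.exp (η * x) * E = 1 := by rw [hE, ← Real.exp_add]; simp
    nlinarith
  set l := 1 + 2 * η with hl
  have hxl : x ≤ l * x := by nlinarith
  have hBt : ‖(η : ℂ) * T (l * x) * (E : ℂ)‖ ≤ 4 * δ := by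
    rw [norm_mul, norm_mul, Complex.norm_real, Complex.norm_real, Real.norm_of_nonneg hη0.le,
      Real.norm_of_nonneg hE0.le]
    have h1 := hC (l * x) (by positivity)
    calc _ ≤ η * (δ * (l * x) + C) * E := by gcongr
      _ = δ * l * (η * x * E) + η * C * E := by ring
      _ ≤ δ * 3 * 1 + δ * 1 := by
        gcongr; linarith
      _ = _ := by ring
  have hAt : ‖T' x - (l : ℂ) * T' (l * x) * (E : ℂ)‖ ≤ 4 * δ := by
    rcases le_total X x with hXx | hXx
    · have h1 := hX x hXx
      have h2 := hX (l * x) (hXx.trans hxl)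
      calc _ ≤ ‖T' x‖ + ‖(l : ℂ) * T' (l * x) * (E : ℂ)‖ := norm_sub_le _ _
        _ = ‖T' x‖ + l * ‖T' (l * x)‖ * E := by
          rw [norm_mul, norm_mul, Complex.norm_real, Complex.norm_real, Real.norm_of_nonneg (by positivity),
            Real.norm_of_nonneg hE0.le]
        _ ≤ δ + 3 * δ * 1 := by gcongr; linarith
        _ = _ := by ring
    · have e : T' x - (l : ℂ) * T' (l * x) * (E : ℂ) =
        ((1 - E : ℝ) : ℂ) * T' x + (E : ℂ) * (T' x - T' (l * x)) - ((2 * η * E : ℝ) : ℂ) * T' (l * x) := by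
        rw [hl]; push_cast; ring
      have h1 : ‖T' x - T' (l * x)‖ ≤ δ := by
        rw [← dist_eq_norm]
        apply (hu _).le
        rw [Real.dist_eq, abs_sub_comm, abs_of_nonneg (by linarith)]
        nlinarith
      rw [e]
      calc _ ≤ ‖((1 - E : ℝ) : ℂ) * T' x‖ + ‖(E : ℂ) * (T' x - T' (l * x))‖ + ‖((2 * η * E : ℝ) : ℂ) * T' (l * x)‖ :=
            (norm_sub_le _ _).trans (by gcongr; exact norm_add_le _ _)
        _ = (1 - E) * ‖T' x‖ + E * ‖T' x - T' (l * x)‖ + 2 * η * E * ‖T' (l * x)‖ := by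
          rw [norm_mul, norm_mul, norm_mul, Complex.norm_real, Complex.norm_real, Complex.norm_real,
            Real.norm_of_nonneg (by linarith), Real.norm_of_nonneg hE0.le, Real.norm_of_nonneg (by positivity)]
        _ ≤ (η * X) * B + 1 * δ + 2 * η * 1 * B := by
          gcongr
          · exact hE2.trans (by gcongr)
          · exact hB _
          · exact hB _
        _ ≤ 4 * δ := by nlinarith
  have e : T' x - sg' T T' η x = (T' x - (l : ℂ) * T' (l * x) * (E : ℂ)) + (η : ℂ) * T (l * x) * (E : ℂ) := by
    rw [sg']; ring
  rw [e]
  refine (norm_add_le _ _).trans ?_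
  linarith

/-- The affine contraction of the rectangle. -/
noncomputable def wmap (η : ℝ) (s : ℂ) : ℂ := (((1 + 2 * η)⁻¹ : ℝ) : ℂ) * (s + (η : ℂ))

lemma wmap_re (η : ℝ) (s : ℂ) : (wmap η s).re = (1 + 2 * η)⁻¹ * (s.re + η) := by
  rw [wmap, Complex.re_ofReal_mul]; simp

lemma wmap_im (η : ℝ) (s : ℂ) : (wmap η s).im = (1 + 2 * η)⁻¹ * s.im := by
  rw [wmap, Complex.im_ofReal_mul]; simp

lemma laplace_sg {T : ℝ → ℂ} {η : ℝ} (hη : 0 < η) (s : ℂ) :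
    Laplace (sg T η) s = (((1 + 2 * η)⁻¹ : ℝ) : ℂ) * Laplace T (wmap η s) := by
  have hl : 0 < 1 + 2 * η := by linarith
  have := integral_comp_mul_left_Ioi (fun y : ℝ => T y * Complex.exp (-(wmap η s * (y : ℂ)))) 0 hl
  rw [mul_zero, Complex.real_smul] at this
  rw [Laplace, Laplace, ← this]
  congr 1; ext x
  rw [sg, mul_assoc, Complex.ofReal_exp, ← Complex.exp_add]
  congr 2
  rw [wmap]
  have : ((1 + 2 * η : ℝ) : ℂ) ≠ 0 := by exact_mod_cast hl.ne'
  have e : (((1 + 2 * η)⁻¹ : ℝ) : ℂ) * (s + (η : ℂ)) * (((1 + 2 * η) * x : ℝ) : ℂ) = (s + η) * x := by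
    rw [Complex.ofReal_inv, Complex.ofReal_mul]
    field_simp
  rw [e]
  push_cast
  ring

lemma wmap_mem_open {α r η : ℝ} (hα : α < 0) (hr : 0 < r) (hη : 0 < η) {s : ℂ}
    (hs : s ∈ Rbar (α + η * α) (r * (1 + η))) : wmap η s ∈ Ropen α r := by
  obtain ⟨h1, h2, h3⟩ := hs
  have hl : 0 < 1 + 2 * η := by linarith
  refine ⟨?_, ?_, ?_⟩
  · rw [wmap_re, lt_inv_mul_iff₀ hl]; nlinarith
  · rw [wmap_re, inv_mul_lt_iff₀ hl]; linarith
  · rw [wmap_im, abs_mul, abs_of_pos (inv_pos.2 hl), inv_mul_lt_iff₀ hl]; nlinarith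

lemma Ropen_sub {α r : ℝ} : Ropen α r ⊆ Rbar α r := fun _ h => ⟨h.1.le, h.2.1.le, h.2.2.le⟩

lemma wmap_mem {α r η : ℝ} (hα : α < 0) (hr : 0 < r) (hη : 0 < η) {s : ℂ}
    (hs : s ∈ Rbar α r) : wmap η s ∈ Rbar α r := by
  refine Ropen_sub (wmap_mem_open hα hr hη ⟨?_, hs.2.1, ?_⟩)
  · nlinarith [hs.1]
  · nlinarith [hs.2.2]

lemma isOpen_Ropen (α r : ℝ) : IsOpen (Ropen α r) := by
  apply (isOpen_lt continuous_const Complex.continuous_re).inter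
  exact (isOpen_lt Complex.continuous_re continuous_const).inter
    (isOpen_lt Complex.continuous_im.abs continuous_const)

lemma isCompact_Rbar (α r : ℝ) : IsCompact (Rbar α r) := by
  have : Rbar α r = Icc α 1 ×ℂ Icc (-r) r := by
    ext s; simp [Rbar, Complex.mem_reProdIm, abs_le, and_assoc]
  rw [this]
  exact isCompact_Icc.reProdIm isCompact_Icc

lemma F_approx {α r : ℝ} (hα : α < 0) (hr : 0 < r) {F : ℂ → ℂ} (hF : ContinuousOn F (Rbar α r))
    (ε : ℝ) (hε : 0 < ε) :
    ∀ᶠ η in nhdsWithin (0:ℝ) (Ioi 0), ∀ s ∈ Rbar α r,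
      ‖F s - (((1 + 2 * η)⁻¹ : ℝ) : ℂ) * F (wmap η s)‖ ≤ ε := by
  obtain ⟨M, hM⟩ := (isCompact_Rbar α r).exists_bound_of_continuousOn hF
  obtain ⟨N, hN⟩ := (isCompact_Rbar α r).exists_bound_of_continuousOn continuousOn_id
  obtain ⟨d, hd, hu⟩ := Metric.uniformContinuousOn_iff.1
    ((isCompact_Rbar α r).uniformContinuousOn_of_continuous hF) (ε / 2) (by positivity)
  filter_upwards [self_mem_nhdsWithin, ev_small (2 * N + 1) d hd, ev_small (2 * M) (ε/2) (by positivity)]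
    with η hη0 h1 h2 s hs
  have hη0 : 0 < η := hη0
  have hl : 0 < 1 + 2 * η := by linarith
  have hw := wmap_mem hα hr hη0 hs
  have hi1 : (1 + 2 * η)⁻¹ ≤ 1 := inv_le_one_of_one_le₀ (by linarith)
  have hi0 : 0 < (1 + 2 * η)⁻¹ := inv_pos.2 hl
  have hi2 : 1 - (1 + 2 * η)⁻¹ ≤ 2 * η := by
    have : (1 + 2 * η)⁻¹ * (1 + 2 * η) = 1 := inv_mul_cancel₀ hl.ne'
    nlinarith
  have hdist : dist s (wmap η s) < d := by
    rw [dist_eq_norm]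
    have e : s - wmap η s = ((1 - (1 + 2 * η)⁻¹ : ℝ) : ℂ) * s - (((1 + 2 * η)⁻¹ * η : ℝ) : ℂ) := by
      rw [wmap]; push_cast; ring
    have hNs : ‖s‖ ≤ N := hN s hs
    rw [e]
    calc _ ≤ (1 - (1 + 2 * η)⁻¹) * ‖s‖ + (1 + 2 * η)⁻¹ * η := by
          refine (norm_sub_le _ _).trans ?_
          rw [norm_mul, Complex.norm_real, Complex.norm_real,
            Real.norm_of_nonneg (by linarith), Real.norm_of_nonneg (by positivity)]
      _ ≤ 2 * η * N + 1 * η := by gcongr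
      _ < d := by linarith
  have h3 := (hu s hs _ hw hdist).le
  rw [dist_eq_norm] at h3
  have e : F s - (((1 + 2 * η)⁻¹ : ℝ) : ℂ) * F (wmap η s) =
    (F s - F (wmap η s)) + ((1 - (1 + 2 * η)⁻¹ : ℝ) : ℂ) * F (wmap η s) := by push_cast; ring
  rw [e]
  refine (norm_add_le _ _).trans ?_
  rw [norm_mul, Complex.norm_real, Real.norm_of_nonneg (by linarith)]
  have h4 : (1 - (1 + 2 * η)⁻¹) * ‖F (wmap η s)‖ ≤ 2 * η * M := by
    gcongr; exact hM _ hw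
  linarith

lemma mk_dat (τ τ' : ℝ → ℂ)
    (hder : ∀ x ∈ Set.Ici (0 : ℝ), HasDerivWithinAt τ (τ' x) (Set.Ici 0) x)
    (hcont : ContinuousOn τ' (Set.Ici 0))
    (hto0 : Tendsto τ' atTop (nhds 0))
    (hτ0 : τ 0 = 0) (hτ'0 : τ' 0 = 0) : Dat ((Ici 0).indicator τ) ((Ici 0).indicator τ') where
  der x := by
    have hz : ∀ y ∈ Iic (0:ℝ), (Ici 0).indicator τ y = 0 := by
      intro y hy
      rcases eq_or_lt_of_le (mem_Iic.1 hy) with h | h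
      · simp [h, hτ0]
      · exact indicator_of_notMem (by simpa using h) _
    have hp : ∀ y ∈ Ici (0:ℝ), (Ici 0).indicator τ y = τ y := fun y hy => indicator_of_mem hy _
    have hL : ∀ x ∈ Iic (0:ℝ), HasDerivWithinAt ((Ici 0).indicator τ) 0 (Iic 0) x := fun x hx =>
      (hasDerivWithinAt_const x (Iic 0) (0:ℂ)).congr hz (hz x hx)
    have hR : ∀ x ∈ Ici (0:ℝ), HasDerivWithinAt ((Ici 0).indicator τ) (τ' x) (Ici 0) x := fun x hx =>
      (hder x hx).congr hp (hp x hx)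
    rcases lt_trichotomy x 0 with h | h | h
    · rw [indicator_of_notMem (by simpa using h)]
      exact (hL x h.le).hasDerivAt (Iic_mem_nhds h)
    · subst h
      have h1 := hR 0 self_mem_Ici
      have h2 := hL 0 self_mem_Iic
      rw [indicator_of_mem self_mem_Ici]
      rw [hτ'0] at h1 ⊢
      have := h2.union h1
      rwa [Iic_union_Ici, hasDerivWithinAt_univ] at this
    · rw [indicator_of_mem (mem_Ici.2 h.le)]
      exact (hR x h.le).hasDerivAt (Ici_mem_nhds h)
  cont := by
    have : (Ici (0:ℝ)).indicator τ' = fun x => τ' (max x 0) := by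
      ext x
      by_cases hx : 0 ≤ x
      · rw [indicator_of_mem (mem_Ici.2 hx), max_eq_left hx]
      · rw [indicator_of_notMem (by simpa using hx), max_eq_right (by linarith), hτ'0]
    rw [this]
    exact hcont.comp_continuous (by fun_prop) (fun x => mem_Ici.2 (le_max_right _ _))
  T0 y hy := by
    rcases eq_or_lt_of_le hy with h | h
    · simp [h, hτ0]
    · exact indicator_of_notMem (by simpa using h) _
  T'0 y hy := by
    rcases eq_or_lt_of_le hy with h | h
    · simp [h, hτ'0]
    · exact indicator_of_notMem (by simpa using h) _
  lim := by
    refine hto0.congr' ?_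
    filter_upwards [eventually_ge_atTop 0] with x hx
    exact (indicator_of_mem (mem_Ici.2 hx) _).symm

lemma laplace_ind (τ : ℝ → ℂ) (s : ℂ) : Laplace ((Ici 0).indicator τ) s = Laplace τ s := by
  unfold Laplace
  apply setIntegral_congr_fun measurableSet_Ioi
  intro x hx
  simp only
  rw [indicator_of_mem (mem_Ici.2 (mem_Ioi.1 hx).le)]

/-- `Y` is dense in `V⁰_{α,r}`: every `τ ∈ V_{α,r}` with `τ(0) = τ'(0) = 0` (with
extension `F`) can be approximated in `‖·‖_{α,r}` by Schwartz functions `ψ`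
supported in `[0,∞)` whose Laplace transforms extend analytically to an open
neighborhood of `R̄_{α',r'}` for some `α' < α` and `r' > r`. -/
theorem Y_dense_in_V0alphar
    (α r : ℝ) (hα : α < 0) (hr : 0 < r)
    (τ τ' : ℝ → ℂ) (F : ℂ → ℂ)
    (hder : ∀ x ∈ Set.Ici (0 : ℝ), HasDerivWithinAt τ (τ' x) (Set.Ici 0) x)
    (hcont : ContinuousOn τ' (Set.Ici 0))
    (hto0 : Tendsto τ' atTop (nhds 0))
    (hτ0 : τ 0 = 0) (hτ'0 : τ' 0 = 0)
    (hFan : DifferentiableOn ℂ F (Ropen α r))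
    (hFcont : ContinuousOn F (Rbar α r))
    (hFeq : ∀ s ∈ Rbar α r, 0 < s.re → F s = Laplace τ s)
    (ε : ℝ) (hε : 0 < ε) :
    ∃ ψ : SchwartzMap ℝ ℂ, (∀ x : ℝ, x < 0 → ψ x = 0) ∧
      ∃ α' r' : ℝ, α' < α ∧ r < r' ∧
        ∃ (U : Set ℂ) (G : ℂ → ℂ), IsOpen U ∧ Rbar α' r' ⊆ U ∧
          DifferentiableOn ℂ G U ∧
          (∀ s ∈ U, 0 < s.re → G s = Laplace (⇑ψ) s) ∧
          ∃ ε₁ ε₂ : ℝ, 0 ≤ ε₁ ∧ 0 ≤ ε₂ ∧ ε₁ + ε₂ < ε ∧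
            (∀ x : ℝ, 0 ≤ x → ‖τ' x - deriv (⇑ψ) x‖ ≤ ε₁) ∧
            (∀ s ∈ Rbar α r, ‖F s - G s‖ ≤ ε₂) := by
  set T : ℝ → ℂ := (Ici 0).indicator τ with hTdef
  set T' : ℝ → ℂ := (Ici 0).indicator τ' with hT'def
  have hD : Dat T T' := mk_dat τ τ' hder hcont hto0 hτ0 hτ'0
  have hε8 : 0 < ε / 8 := by positivity
  obtain ⟨M, hM⟩ := (isCompact_Rbar α r).exists_bound_of_continuousOn hFcont
  obtain ⟨N, hN⟩ := (isCompact_Rbar α r).exists_bound_of_continuousOn continuousOn_id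
  obtain ⟨B, hB0, hB⟩ := hD.bdd
  have h0mem : (0:ℂ) ∈ Rbar α r := ⟨by simpa using hα.le, by simp, by simpa using hr.le⟩
  have hM0 : 0 ≤ M := (norm_nonneg _).trans (hM 0 h0mem)
  have hN0 : 0 ≤ N := (norm_nonneg _).trans (hN 0 h0mem)
  obtain ⟨d, hd, hu⟩ := Metric.uniformContinuous_iff.1 hD.unif (ε / 8) hε8
  have hpos : ∀ᶠ x in nhdsWithin (0:ℝ) (Ioi 0), 0 < x := self_mem_nhdsWithin
  obtain ⟨η, hη, hA, hFA⟩ := (hpos.and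
    ((hD.approx (ε / 8) hε8).and (F_approx hα hr hFcont (ε / 8) hε8))).exists
  have hη : 0 < η := hη
  have hl : 0 < 1 + 2 * η := by linarith
  obtain ⟨δ, hδ, hδd, hδN, hδM⟩ := (hpos.and
    ((ev_small 1 d hd).and ((ev_small N 1 one_pos).and (ev_small (2 * N * M) (ε / 8) hε8)))).exists
  have hδ : 0 < δ := hδ
  obtain ⟨φ, hφ, hφ1, hφ2⟩ := exists_moll δ hδ
  obtain ⟨C, hC⟩ := hD.sg_decay hη
  have hc : 0 < η / 2 := by positivity
  obtain ⟨ψ, hψ⟩ := exists_schwartz hc (hD.sg_cont η) (hD.sg_zero hη) hC hφ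
  have hsK : ∀ x, ‖sg' T T' η x‖ ≤ B + ε / 8 := by
    intro x
    have h1 := norm_le_norm_add_norm_sub (T' x) (sg' T T' η x)
    linarith [hB x, hA x]
  refine ⟨ψ, ?_, α + η * α, r * (1 + η), by nlinarith, by nlinarith, wmap η ⁻¹' Ropen α r,
    fun s => MLap φ s * ((((1 + 2 * η)⁻¹ : ℝ) : ℂ) * F (wmap η s)), ?_, ?_, ?_, ?_,
    ε / 4, ε / 4, by positivity, by positivity, by linarith, ?_, ?_⟩
  · intro x hx
    obtain ⟨K, hK, hb⟩ := mconv_decay (hD.sg_cont η) (hD.sg_zero hη) hC 0 φ hφ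
    rw [hψ]
    simpa using (hb x).2 hx.le
  · exact (isOpen_Ropen α r).preimage (by unfold wmap; fun_prop)
  · exact fun s hs => wmap_mem_open hα hr hη hs
  · refine (MLap_differentiable hφ).differentiableOn.mul ?_
    refine DifferentiableOn.const_mul ?_ _
    refine hFan.comp ?_ (fun s hs => hs)
    unfold wmap
    fun_prop
  · intro s hs hre
    beta_reduce
    rw [hψ, laplace_mconv hc (hD.sg_cont η) (hD.sg_zero hη) hC hφ s hre, laplace_sg hη, laplace_ind,
      hFeq _ (Ropen_sub hs)]
    rw [wmap_re]; positivity
  · intro x hx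
    rw [hψ, (mconv_deriv (hD.sg_der η) (hD.sg'_cont η) hφ hsK x).deriv]
    have hx' : τ' x = T' x := (indicator_of_mem (mem_Ici.2 hx) _).symm
    rw [hx']
    have hsc := hD.sg'_cont η
    refine moll_avg hφ hφ1 hφ2 (fun t => sg' T T' η (x - t)) (by fun_prop) _ _ fun t ht => ?_
    have h1 : dist (T' x) (T' (x - t)) < ε / 8 := by
      apply hu
      rw [Real.dist_eq, sub_sub_cancel, abs_of_nonneg ht.1]
      linarith [ht.2]
    rw [dist_eq_norm] at h1
    have h2 := norm_sub_le_norm_sub_add_norm_sub (T' x) (T' (x - t)) (sg' T T' η (x - t))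
    linarith [hA (x - t)]
  · intro s hs
    have hw := hM _ (wmap_mem hα hr hη hs)
    have hNs : ‖s‖ ≤ N := hN s hs
    have hΦ : ‖1 - MLap φ s‖ ≤ 2 * (N * δ) := by
      refine moll_avg hφ hφ1 hφ2 (fun t => Complex.exp (-(s * (t : ℂ)))) (by fun_prop) _ _ fun t ht => ?_
      have h1 : ‖-(s * (t : ℂ))‖ ≤ N * δ := by
        rw [norm_neg, norm_mul, Complex.norm_real, Real.norm_of_nonneg ht.1]
        exact mul_le_mul hNs ht.2 ht.1 hN0
      rw [norm_sub_rev]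
      have h2 := Complex.norm_exp_sub_one_le (h1.trans (by linarith))
      linarith
    have hi1 : (1 + 2 * η)⁻¹ ≤ 1 := inv_le_one_of_one_le₀ (by linarith)
    have hi0 : 0 < (1 + 2 * η)⁻¹ := inv_pos.2 hl
    have e : F s - MLap φ s * ((((1 + 2 * η)⁻¹ : ℝ) : ℂ) * F (wmap η s)) =
      (F s - (((1 + 2 * η)⁻¹ : ℝ) : ℂ) * F (wmap η s))
        + (1 - MLap φ s) * ((((1 + 2 * η)⁻¹ : ℝ) : ℂ) * F (wmap η s)) := by ring
    simp only
    rw [e]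
    refine (norm_add_le _ _).trans ?_
    rw [norm_mul, norm_mul, Complex.norm_real, Real.norm_of_nonneg hi0.le]
    have h3 : ‖1 - MLap φ s‖ * ((1 + 2 * η)⁻¹ * ‖F (wmap η s)‖) ≤ 2 * (N * δ) * (1 * M) := by gcongr
    have h4 := hFA s hs
    linarith
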